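/- Let c > 0 with 1/c an integer, let n ≥ 1 be an integer, and set ε = 2^{−2^{2n}}. If G is an ε-sparse (ε|G|^{1−c}, ε|G|)-coherent graph with at least two vertices, then G contains a spider of length n and height at most 2 + 2/c, with mass at least ε|G|: that is, there exist a vertex a and coverings (a, H_1, B_1), …, (a, H_n, B_n), all with apex a, each of height at most 2 + 2/c and with |B_i| ≥ ε|G|, such that the sets H_i∖{a} are pairwise disjoint and pairwise anticomplete. -/

import Mathlib

/-- Two vertex sets are anticomplete: no edges between them. -/
def Anticomplete {V : Type} (G : SimpleGraph V) (A B : Finset V) : Prop :=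
  ∀ a ∈ A, ∀ b ∈ B, ¬ G.Adj a b

/-- A covering (a, H, B) in G: H, B disjoint, a ∈ H, G[H] connected,
and every vertex of B has a neighbour in H. -/
def IsCovering {V : Type} (G : SimpleGraph V) (a : V) (H B : Finset V) : Prop :=
  Disjoint H B ∧ a ∈ H ∧ (SimpleGraph.induce (↑H : Set V) G).Connected ∧
    ∀ b ∈ B, ∃ h ∈ H, G.Adj h b

/-- The covering with apex a and heart H has height at most r: every vertex of H is
joined to a by a path of G[H] of length at most r - 1. -/
def HeightLE {V : Type} (G : SimpleGraph V) (a : V) (H : Finset V) (r : ℝ) : Prop :=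
  ∀ v ∈ H, ∃ p : G.Walk a v, p.IsPath ∧ (∀ x ∈ p.support, x ∈ H) ∧ (p.length : ℝ) ≤ r - 1

/-!
Write `e = ε|G|`, `s = ε|G|^(1-c)` and `k = 1/c`, so that a set of size `s` misses fewer than `e`
vertices with its neighbourhood. Growing a ball one layer at a time, each time by a factor `|G|^c`,
shows that every set of `3e` vertices contains a heart: a connected set of radius at most `k` with
at least `s` vertices.

Start from `2 ^ n` disjoint blocks of vertices, none of them covered by a heart yet. Repeatedly take
the block `W j` with the fewest hearts, find a heart inside it, and prune this heart leaf by leaf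
until it covers about half of one of the other blocks `W i`, and at most about half of every other.
Give the pruned heart to `W i`, restrict `W i` to the covered half and each remaining block to its
uncovered half, and discard `W j`. A block with `m` hearts has weight `2 ^ m`, and the total weight
never drops, so the last remaining block is covered by at least `n` pairwise anticomplete hearts.
Any of its vertices is the apex of the required spider.
-/

open Finset

section Neighbourhood

variable {V : Type*} [DecidableEq V] (G : SimpleGraph V) [G.LocallyFinite]

/-- The open neighbourhood of `H`: all vertices having a neighbour in `H`. It may meet `H`. -/
def nbhd (H : Finset V) : Finset V :=
  H.biUnion fun v => G.neighborFinset v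

variable {G}

theorem mem_nbhd {H : Finset V} {u : V} : u ∈ nbhd G H ↔ ∃ h ∈ H, G.Adj h u := by
  simp [nbhd]

@[simp]
theorem nbhd_empty : nbhd G ∅ = ∅ :=
  biUnion_empty

theorem nbhd_union (H K : Finset V) : nbhd G (H ∪ K) = nbhd G H ∪ nbhd G K :=
  union_biUnion

theorem card_inter_nbhd_le_card_inter_nbhd_erase (B H : Finset V) (x : V) :
    #(B ∩ nbhd G H) ≤ #(B ∩ nbhd G (H.erase x)) + G.degree x := by
  have hsub : B ∩ nbhd G H ⊆ B ∩ nbhd G (H.erase x) ∪ G.neighborFinset x := by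
    intro y hy
    obtain ⟨hyB, h, hh, hadj⟩ := by simpa only [mem_inter, mem_nbhd] using hy
    by_cases hx : h = x
    · exact mem_union_right _ (by simpa [← hx] using hadj)
    · exact mem_union_left _ (mem_inter.2 ⟨hyB, mem_nbhd.2 ⟨h, mem_erase.2 ⟨hx, hh⟩, hadj⟩⟩)
  exact (card_le_card hsub).trans (card_union_le _ _)

end Neighbourhood

section Radius

variable {V : Type*} {G : SimpleGraph V} {H : Finset V} {r : ℕ}

/-- `G[H]` is connected and has radius at most `r`. Walks of `G` with support in `H` are used
instead of walks of the induced subgraph, as in `HeightLE`. -/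
def HasRadiusLE (G : SimpleGraph V) (H : Finset V) (r : ℕ) : Prop :=
  ∃ v ∈ H, ∀ u ∈ H, ∃ p : G.Walk v u, (∀ x ∈ p.support, x ∈ H) ∧ p.length ≤ r

theorem hasRadiusLE_singleton (v : V) : HasRadiusLE G {v} 0 := by
  refine ⟨v, mem_singleton_self v, fun u hu => ?_⟩
  obtain rfl := mem_singleton.1 hu
  exact ⟨.nil, by simp, le_rfl⟩

theorem HasRadiusLE.nonempty (h : HasRadiusLE G H r) : H.Nonempty :=
  let ⟨v, hv, _⟩ := h
  ⟨v, hv⟩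

theorem HasRadiusLE.exists_walk (h : HasRadiusLE G H r) {u w : V} (hu : u ∈ H) (hw : w ∈ H) :
    ∃ p : G.Walk u w, (∀ x ∈ p.support, x ∈ H) ∧ p.length ≤ 2 * r := by
  obtain ⟨v, -, hwalk⟩ := h
  obtain ⟨p, hpH, hpr⟩ := hwalk u hu
  obtain ⟨q, hqH, hqr⟩ := hwalk w hw
  refine ⟨p.reverse.append q, fun x hx => ?_, ?_⟩
  · rw [SimpleGraph.Walk.mem_support_append_iff, SimpleGraph.Walk.support_reverse,
      List.mem_reverse] at hx
    exact hx.elim (hpH x) (hqH x)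
  · rw [SimpleGraph.Walk.length_append, SimpleGraph.Walk.length_reverse]
    omega

variable [DecidableEq V]

theorem HasRadiusLE.union_nbhd_inter [G.LocallyFinite] (h : HasRadiusLE G H r) (U : Finset V) :
    HasRadiusLE G (H ∪ nbhd G H ∩ U) (r + 1) := by
  obtain ⟨v, hv, hwalk⟩ := h
  refine ⟨v, mem_union_left _ hv, fun u hu => ?_⟩
  by_cases huH : u ∈ H
  · obtain ⟨p, hpH, hpr⟩ := hwalk u huH
    exact ⟨p, fun x hx => mem_union_left _ (hpH x hx), by omega⟩
  · have hunbhd : u ∈ nbhd G H := (mem_inter.1 ((mem_union.1 hu).resolve_left huH)).1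
    obtain ⟨w, hw, hadj⟩ := mem_nbhd.1 hunbhd
    obtain ⟨p, hpH, hpr⟩ := hwalk w hw
    refine ⟨p.concat hadj, fun x hx => ?_, by rw [SimpleGraph.Walk.length_concat]; omega⟩
    rw [SimpleGraph.Walk.support_concat, List.mem_append, List.mem_singleton] at hx
    rcases hx with hx | rfl
    · exact mem_union_left _ (hpH x hx)
    · exact hu

theorem HasRadiusLE.exists_erase (h : HasRadiusLE G H r) (hH : H.Nontrivial) :
    ∃ x ∈ H, HasRadiusLE G (H.erase x) r := by
  classical
  obtain ⟨v, hv, hwalk⟩ := h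
  -- The erased vertex `x` is at distance exactly `m`, the eccentricity of `v` in `G[H]`.
  obtain ⟨m, hm, hmin⟩ := exists_minimal_le_of_wellFoundedLT
    (fun m => ∀ u ∈ H, ∃ p : G.Walk v u, (∀ x ∈ p.support, x ∈ H) ∧ p.length ≤ m) r hwalk
  obtain ⟨w, hw, hwv⟩ := hH.exists_ne v
  have hmpos : 0 < m := by
    obtain ⟨p, -, hpm⟩ := hmin.1 w hw
    exact (Nat.pos_of_ne_zero fun hp => hwv (p.eq_of_length_eq_zero hp).symm).trans_le hpm
  obtain ⟨x, hx, hfar⟩ : ∃ x ∈ H, ∀ p : G.Walk v x, (∀ y ∈ p.support, y ∈ H) → m ≤ p.length := by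
    by_contra! hnear
    refine absurd (hmin.2 (y := m - 1) (fun u hu => ?_) (Nat.sub_le m 1)) (by omega)
    obtain ⟨p, hpH, hpm⟩ := hnear u hu
    exact ⟨p, hpH, Nat.le_sub_one_of_lt hpm⟩
  have hvx : v ≠ x := by
    rintro rfl
    simpa using (hfar .nil (by simpa using hv)).trans_lt' hmpos
  refine ⟨x, hx, v, mem_erase.2 ⟨hvx, hv⟩, fun u hu => ?_⟩
  obtain ⟨hux, huH⟩ := mem_erase.1 hu
  obtain ⟨p, hpH, hpm⟩ := hmin.1 u huH
  refine ⟨p, fun y hy => mem_erase.2 ⟨?_, hpH y hy⟩, hpm.trans hm⟩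
  rintro rfl
  have hlong := hfar (p.takeUntil y hy) fun z hz =>
    hpH z (p.support_takeUntil_subset_support hy hz)
  have hshort := SimpleGraph.Walk.length_takeUntil_lt_length hy hux.symm
  omega

theorem exists_hasRadiusLE_of_expanding [G.LocallyFinite] {U : Finset V} {s M : ℝ} (hM : 0 ≤ M)
    (hU : U.Nonempty)
    (hexp : ∀ X ⊆ U, X.Nonempty → (#X : ℝ) < s → M * #X ≤ #(X ∪ nbhd G X ∩ U)) (r : ℕ) :
    ∃ H ⊆ U, HasRadiusLE G H r ∧ min s (M ^ r) ≤ #H := by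
  induction r with
  | zero =>
    obtain ⟨v, hv⟩ := hU
    exact ⟨{v}, singleton_subset_iff.2 hv, hasRadiusLE_singleton v, by simp⟩
  | succ r ih =>
    obtain ⟨H, hHU, hrad, hcard⟩ := ih
    refine ⟨H ∪ nbhd G H ∩ U, union_subset hHU inter_subset_right, hrad.union_nbhd_inter U, ?_⟩
    rw [min_le_iff]
    rcases le_or_gt s #H with hs | hs
    · exact Or.inl (hs.trans (mod_cast card_le_card subset_union_left))
    · have hpow : M ^ r ≤ #H := (min_le_iff.1 hcard).resolve_left hs.not_ge
      right
      calc M ^ (r + 1) = M * M ^ r := pow_succ' M r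
        _ ≤ M * #H := by gcongr
        _ ≤ #(H ∪ nbhd G H ∩ U) := hexp H hHU hrad.nonempty hs

end Radius

section Coherence

variable {V : Type} {G : SimpleGraph V} {s e : ℝ} {k : ℕ}

theorem Anticomplete.symm {A B : Finset V} (h : Anticomplete G A B) : Anticomplete G B A :=
  fun b hb a ha hadj => h a ha b hb hadj.symm

theorem Anticomplete.mono_right {A B C : Finset V} (h : Anticomplete G A C) (hBC : B ⊆ C) :
    Anticomplete G A B :=
  fun a ha b hb => h a ha b (hBC hb)

theorem anticomplete_iff_disjoint_nbhd [DecidableEq V] [G.LocallyFinite] {A B : Finset V} :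
    Anticomplete G A B ↔ Disjoint (nbhd G A) B := by
  simp only [Anticomplete, disjoint_left, mem_nbhd]
  grind

/-- `G` is `(s, e)`-coherent: there are no disjoint anticomplete sets of sizes at least `s` and at
least `e`. -/
def IsCoherent (G : SimpleGraph V) (s e : ℝ) : Prop :=
  ∀ A B : Finset V, Disjoint A B → Anticomplete G A B → s ≤ #A → (#B : ℝ) < e

theorem IsCoherent.one_lt [Nontrivial V] [G.LocallyFinite] (hcoh : IsCoherent G s e)
    (hdeg : ∀ v, (G.degree v : ℝ) < e) (hse : s ≤ e) : 1 < e := by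
  by_contra! he
  obtain ⟨u, w, huw⟩ := exists_pair_ne V
  have hu : ¬ G.Adj u w := fun hadj => by
    have hpos : 0 < G.degree u := (G.degree_pos_iff_exists_adj u).2 ⟨w, hadj⟩
    have : (1 : ℝ) ≤ G.degree u := mod_cast hpos
    linarith [hdeg u]
  have hlt := hcoh {u} {w} (disjoint_singleton.2 huw) (by simpa [Anticomplete] using hu)
    (by simpa using hse.trans he)
  rw [card_singleton, Nat.cast_one] at hlt
  linarith

variable [DecidableEq V] [G.LocallyFinite]

theorem IsCoherent.card_sdiff_nbhd_lt (hcoh : IsCoherent G s e) {A B : Finset V}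
    (hAB : Disjoint A (B \ nbhd G A)) (hA : s ≤ #A) : (#(B \ nbhd G A) : ℝ) < e :=
  hcoh A _ hAB (anticomplete_iff_disjoint_nbhd.2 disjoint_sdiff) hA

theorem IsCoherent.card_lt_of_card_union_nbhd_le (hcoh : IsCoherent G s e) {M : ℝ} (hM : 0 ≤ M)
    (hsM : s * M ≤ e) {A W : Finset V} (hW : 3 * e ≤ #W) (hA : (#A : ℝ) ≤ 2 * s)
    (hclosed : (#(A ∪ nbhd G A ∩ W) : ℝ) ≤ M * #A) : (#A : ℝ) < s := by
  by_contra! hsA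
  have hrest : (#((W \ A) \ nbhd G A) : ℝ) < e :=
    hcoh.card_sdiff_nbhd_lt (disjoint_sdiff.mono_right sdiff_subset) hsA
  have hsplit : #W ≤ #((W \ A) \ nbhd G A) + #(A ∪ nbhd G A ∩ W) := by
    refine (card_le_card fun x hx => ?_).trans (card_union_le _ _)
    simp only [mem_union, mem_sdiff, mem_inter]
    tauto
  have hW_lt : 3 * e < 3 * e := by
    calc 3 * e ≤ #W := hW
      _ ≤ #((W \ A) \ nbhd G A) + #(A ∪ nbhd G A ∩ W) := mod_cast hsplit
      _ < e + M * (2 * s) := add_lt_add_of_lt_of_le hrest (hclosed.trans (by gcongr))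
      _ ≤ 3 * e := by linarith
  exact hW_lt.false

-- `U` is the complement in `W` of a maximal set of at most `2 * s` vertices that fails to expand.
theorem IsCoherent.exists_expanding_subset (hcoh : IsCoherent G s e) {M : ℝ} (hs : 0 ≤ s)
    (hM : 1 ≤ M) (hsM : s * M ≤ e) {W : Finset V} (hW : 3 * e ≤ #W) :
    ∃ U ⊆ W, U.Nonempty ∧
      ∀ X ⊆ U, X.Nonempty → (#X : ℝ) < s → M * #X ≤ #(X ∪ nbhd G X ∩ U) := by
  obtain ⟨A, hA⟩ := Finset.exists_maximal
    (s := {A ∈ W.powerset | (#A : ℝ) ≤ 2 * s ∧ (#(A ∪ nbhd G A ∩ W) : ℝ) ≤ M * #A})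
    ⟨∅, by simp [hs]⟩
  simp only [mem_filter, mem_powerset] at hA
  obtain ⟨⟨hAW, hA2s, hAclosed⟩, hAmax⟩ := hA
  have hse : s ≤ e := by nlinarith
  have hAs : (#A : ℝ) < s :=
    hcoh.card_lt_of_card_union_nbhd_le (zero_le_one.trans hM) hsM hW hA2s hAclosed
  refine ⟨W \ A, sdiff_subset, ?_, fun X hXU hXne hXs => ?_⟩
  · rw [sdiff_nonempty]
    intro hWA
    have : (#W : ℝ) ≤ #A := mod_cast card_le_card hWA
    linarith
  · have hdisj : Disjoint A X := disjoint_sdiff.mono_right hXU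
    have hcard : (#(A ∪ X) : ℝ) = #A + #X := mod_cast card_union_of_disjoint hdisj
    have hexp : M * #(A ∪ X) < #((A ∪ X) ∪ nbhd G (A ∪ X) ∩ W) := by
      by_contra! hle
      have hXA : A ∪ X ⊆ A := hAmax
        ⟨union_subset hAW (hXU.trans sdiff_subset), by linarith, hle⟩ subset_union_left
      exact hXne.ne_empty (disjoint_self.1 (hdisj.mono_left (subset_union_right.trans hXA)))
    have hsub : (A ∪ X) ∪ nbhd G (A ∪ X) ∩ W ⊆
        (A ∪ nbhd G A ∩ W) ∪ (X ∪ nbhd G X ∩ (W \ A)) := by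
      intro x
      simp only [nbhd_union, mem_union, mem_inter, mem_sdiff]
      tauto
    have hle : (#((A ∪ X) ∪ nbhd G (A ∪ X) ∩ W) : ℝ) ≤
        #(A ∪ nbhd G A ∩ W) + #(X ∪ nbhd G X ∩ (W \ A)) :=
      mod_cast (card_le_card hsub).trans (card_union_le _ _)
    rw [hcard, mul_add] at hexp
    linarith

omit [DecidableEq V] in
theorem IsCoherent.exists_hasRadiusLE (hcoh : IsCoherent G s e) {M : ℝ} (hs : 0 ≤ s) (hM : 1 ≤ M)
    (hsM : s * M ≤ e) (hsMk : s ≤ M ^ k) {W : Finset V} (hW : 3 * e ≤ #W) :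
    ∃ H ⊆ W, HasRadiusLE G H k ∧ s ≤ #H := by
  classical
  obtain ⟨U, hUW, hU, hexp⟩ := hcoh.exists_expanding_subset hs hM hsM hW
  obtain ⟨H, hHU, hrad, hcard⟩ := exists_hasRadiusLE_of_expanding (zero_le_one.trans hM) hU hexp k
  exact ⟨H, hHU.trans hUW, hrad, by rwa [min_eq_left hsMk] at hcard⟩

-- Erasing one vertex at a time costs fewer than `e` covered vertices per step, so a minimal set
-- that covers half of some block barely overshoots.
theorem IsCoherent.exists_covering_half (hcoh : IsCoherent G s e)
    (hdeg : ∀ v, (G.degree v : ℝ) < e) {H₀ : Finset V} (hrad₀ : HasRadiusLE G H₀ k)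
    (hcard₀ : s ≤ #H₀) {ι : Type*} {J : Finset ι} (hJ : J.Nonempty) {W : ι → Finset V}
    (hW : ∀ i ∈ J, 2 * e ≤ #(W i)) (hdisj : ∀ i ∈ J, Disjoint H₀ (W i)) :
    ∃ H ⊆ H₀, HasRadiusLE G H k ∧ (∃ i ∈ J, #(W i) ≤ 2 * #(W i ∩ nbhd G H)) ∧
      ∀ i ∈ J, 2 * (#(W i ∩ nbhd G H) : ℝ) ≤ #(W i) + 2 * e := by
  have hhalf₀ : ∃ i ∈ J, #(W i) ≤ 2 * #(W i ∩ nbhd G H₀) := by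
    obtain ⟨i, hi⟩ := hJ
    have hrest : (#(W i \ nbhd G H₀) : ℝ) < e :=
      hcoh.card_sdiff_nbhd_lt ((hdisj i hi).mono_right sdiff_subset) hcard₀
    have hsplit : (#(W i ∩ nbhd G H₀) : ℝ) + #(W i \ nbhd G H₀) = #(W i) :=
      mod_cast card_inter_add_card_sdiff (W i) (nbhd G H₀)
    have : (#(W i) : ℝ) ≤ 2 * #(W i ∩ nbhd G H₀) := by linarith [hW i hi]
    exact ⟨i, hi, mod_cast this⟩
  obtain ⟨H, hHH₀, ⟨hrad, hhalf⟩, hmin⟩ := exists_minimal_le_of_wellFoundedLT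
    (fun H => HasRadiusLE G H k ∧ ∃ i ∈ J, #(W i) ≤ 2 * #(W i ∩ nbhd G H)) H₀ ⟨hrad₀, hhalf₀⟩
  refine ⟨H, hHH₀, hrad, hhalf, fun i hi => ?_⟩
  obtain ⟨x, hx⟩ : ∃ x, 2 * #(W i ∩ nbhd G (H.erase x)) ≤ #(W i) := by
    obtain ⟨v, hv⟩ := hrad.nonempty
    rcases eq_singleton_or_nontrivial hv with rfl | hHnt
    · exact ⟨v, by simp⟩
    · obtain ⟨x, hxH, hrad'⟩ := hrad.exists_erase hHnt
      refine ⟨x, le_of_not_ge fun hge => ?_⟩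
      have hsub : H ⊆ H.erase x := hmin ⟨hrad', i, hi, hge⟩ (erase_subset x H)
      exact notMem_erase x H (hsub hxH)
  have herase : (#(W i ∩ nbhd G H) : ℝ) ≤ #(W i ∩ nbhd G (H.erase x)) + G.degree x :=
    mod_cast card_inter_nbhd_le_card_inter_nbhd_erase (W i) H x
  have hx' : 2 * (#(W i ∩ nbhd G (H.erase x)) : ℝ) ≤ #(W i) := mod_cast hx
  linarith [hdeg x]

end Coherence

section Bundle

variable {V : Type} [DecidableEq V] {G : SimpleGraph V} [G.LocallyFinite] {k : ℕ}

/-- A spider whose apex has not been chosen: a set `S` of hearts of radius at most `k`, pairwise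
disjoint and anticomplete, each of them disjoint from the common base `B` and covering it. -/
structure IsBundle (G : SimpleGraph V) [G.LocallyFinite] (k : ℕ) (S : Finset (Finset V))
    (B : Finset V) : Prop where
  radius : ∀ H ∈ S, HasRadiusLE G H k
  separated : ∀ H ∈ S, ∀ K ∈ S, H ≠ K → Disjoint H K ∧ Anticomplete G H K
  disjoint : ∀ H ∈ S, Disjoint H B
  covers : ∀ H ∈ S, B ⊆ nbhd G H

variable {S : Finset (Finset V)} {B : Finset V}

theorem isBundle_empty (B : Finset V) : IsBundle G k ∅ B :=
  ⟨by simp, by simp, by simp, by simp⟩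

theorem IsBundle.mono (h : IsBundle G k S B) {B' : Finset V} (hB : B' ⊆ B) : IsBundle G k S B' :=
  ⟨h.radius, h.separated, fun H hH => (h.disjoint H hH).mono_right hB,
    fun H hH => hB.trans (h.covers H hH)⟩

theorem IsBundle.insert_heart (h : IsBundle G k S B) {H : Finset V} (hrad : HasRadiusLE G H k)
    (hHS : ∀ K ∈ S, Disjoint K H ∧ Anticomplete G K H) (hHB : Disjoint H B) (hBH : B ⊆ nbhd G H) :
    IsBundle G k (insert H S) B where
  radius := forall_mem_insert .. |>.2 ⟨hrad, h.radius⟩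
  separated := by
    intro K hK L hL hKL
    rcases mem_insert.1 hK with rfl | hKS <;> rcases mem_insert.1 hL with rfl | hLS
    · exact absurd rfl hKL
    · exact ⟨(hHS L hLS).1.symm, (hHS L hLS).2.symm⟩
    · exact hHS K hKS
    · exact h.separated K hKS L hLS hKL
  disjoint := forall_mem_insert .. |>.2 ⟨hHB, h.disjoint⟩
  covers := forall_mem_insert .. |>.2 ⟨hBH, h.covers⟩

end Bundle

section Arrangement

theorem sum_two_pow_le_sum_erase {ι : Type*} [DecidableEq ι] {I : Finset ι} {f g : ι → ℕ}
    {i j : ι} (hi : i ∈ I) (hj : j ∈ I) (hij : i ≠ j) (hf : f j ≤ f i) (hgi : g i = f i + 1)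
    (hg : ∀ l, l ≠ i → g l = f l) : ∑ l ∈ I, 2 ^ f l ≤ ∑ l ∈ I.erase j, 2 ^ g l := by
  have hi' : i ∈ I.erase j := mem_erase.2 ⟨hij, hi⟩
  have hrest : ∑ l ∈ (I.erase j).erase i, 2 ^ g l = ∑ l ∈ (I.erase j).erase i, 2 ^ f l :=
    sum_congr rfl fun l hl => by rw [hg l (ne_of_mem_erase hl)]
  have hpow : 2 ^ f j ≤ 2 ^ f i := Nat.pow_le_pow_right two_pos hf
  rw [← add_sum_erase I _ hj, ← add_sum_erase _ _ hi', ← add_sum_erase _ (fun l => 2 ^ g l) hi',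
    hrest, hgi, pow_succ]
  omega

variable {V : Type} [DecidableEq V] {G : SimpleGraph V} [G.LocallyFinite] {k : ℕ} {ι : Type*}

/-- The state of the merging process: disjoint blocks `W i`, indexed by `i ∈ I`, each being the
base of a bundle `F i` whose hearts are disjoint from and anticomplete to all the other blocks. -/
structure IsArrangement (G : SimpleGraph V) [G.LocallyFinite] (k : ℕ) (I : Finset ι)
    (F : ι → Finset (Finset V)) (W : ι → Finset V) : Prop where
  bundle : ∀ i ∈ I, IsBundle G k (F i) (W i)
  disjoint : ∀ i ∈ I, ∀ j ∈ I, i ≠ j → Disjoint (W i) (W j)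
  separated : ∀ i ∈ I, ∀ j ∈ I, i ≠ j → ∀ H ∈ F i, Disjoint H (W j) ∧ Anticomplete G H (W j)

variable {I : Finset ι} {F : ι → Finset (Finset V)} {W : ι → Finset V}

theorem isArrangement_empty (hW : ∀ i ∈ I, ∀ j ∈ I, i ≠ j → Disjoint (W i) (W j)) :
    IsArrangement G k I (fun _ => ∅) W :=
  ⟨fun i _ => isBundle_empty (W i), hW, by simp⟩

theorem IsArrangement.mono (h : IsArrangement G k I F W) {I' : Finset ι} {W' : ι → Finset V}
    (hI : I' ⊆ I) (hW : ∀ i, W' i ⊆ W i) : IsArrangement G k I' F W' where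
  bundle i hi := (h.bundle i (hI hi)).mono (hW i)
  disjoint i hi j hj hij := (h.disjoint i (hI hi) j (hI hj) hij).mono (hW i) (hW j)
  separated i hi j hj hij H hH :=
    (h.separated i (hI hi) j (hI hj) hij H hH).imp (·.mono_right (hW j)) (·.mono_right (hW j))

variable [DecidableEq ι]

theorem IsArrangement.insert_heart (h : IsArrangement G k I F W) {i : ι} (hi : i ∈ I)
    {H : Finset V} (hrad : HasRadiusLE G H k) (hHF : ∀ K ∈ F i, Disjoint K H ∧ Anticomplete G K H)
    (hHW : ∀ l ∈ I, Disjoint H (W l)) (hcover : W i ⊆ nbhd G H)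
    (hanti : ∀ l ∈ I, l ≠ i → Anticomplete G H (W l)) :
    IsArrangement G k I (Function.update F i (insert H (F i))) W where
  bundle := by
    intro l hl
    rcases eq_or_ne l i with rfl | hli
    · rw [Function.update_self]
      exact (h.bundle l hl).insert_heart hrad hHF (hHW l hl) hcover
    · rw [Function.update_of_ne hli]
      exact h.bundle l hl
  disjoint := h.disjoint
  separated := by
    intro a ha b hb hab K hK
    rcases eq_or_ne a i with rfl | hai
    · rw [Function.update_self] at hK
      rcases mem_insert.1 hK with rfl | hKF
      · exact ⟨hHW b hb, hanti b hb hab.symm⟩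
      · exact h.separated a ha b hb hab K hKF
    · rw [Function.update_of_ne hai] at hK
      exact h.separated a ha b hb hab K hK

theorem IsArrangement.merge (h : IsArrangement G k I F W) {i j : ι} (hi : i ∈ I) (hj : j ∈ I)
    (hij : i ≠ j) {H : Finset V} (hrad : HasRadiusLE G H k) (hHj : H ⊆ W j) :
    IsArrangement G k (I.erase j) (Function.update F i (insert H (F i)))
      (Function.update (fun l => W l \ nbhd G H) i (W i ∩ nbhd G H)) := by
  set W' := Function.update (fun l => W l \ nbhd G H) i (W i ∩ nbhd G H)
  have hW'i : W' i = W i ∩ nbhd G H := Function.update_self ..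
  have hW'l : ∀ l, l ≠ i → W' l = W l \ nbhd G H := fun l hl => Function.update_of_ne hl ..
  have hW'W : ∀ l, W' l ⊆ W l := by
    intro l
    rcases eq_or_ne l i with rfl | hl
    · exact hW'i ▸ inter_subset_left
    · exact hW'l l hl ▸ sdiff_subset
  refine (h.mono (erase_subset j I) hW'W).insert_heart (mem_erase.2 ⟨hij, hi⟩) hrad
    (fun K hK => ?_) (fun l hl => ?_) (hW'i ▸ inter_subset_right) fun l _ hli => ?_
  · exact (h.separated i hi j hj hij K hK).imp (·.mono_right hHj) (·.mono_right hHj)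
  · obtain ⟨hlj, hlI⟩ := mem_erase.1 hl
    exact (h.disjoint j hj l hlI hlj.symm).mono hHj (hW'W l)
  · exact anticomplete_iff_disjoint_nbhd.2 (hW'l l hli ▸ disjoint_sdiff)

variable {s e : ℝ}

theorem IsArrangement.exists_merge (h : IsArrangement G k I F W) (hI : I.Nontrivial)
    (hcoh : IsCoherent G s e) (hdeg : ∀ v, (G.degree v : ℝ) < e)
    (hW : ∀ i ∈ I, 2 * e ≤ #(W i))
    (hlarge : ∀ i ∈ I, ∃ H ⊆ W i, HasRadiusLE G H k ∧ s ≤ #H) :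
    ∃ j ∈ I, ∃ F' W', IsArrangement G k (I.erase j) F' W' ∧
      ∑ i ∈ I, 2 ^ #(F i) ≤ ∑ i ∈ I.erase j, 2 ^ #(F' i) ∧
      ∀ i ∈ I.erase j, (#(W i) : ℝ) ≤ 2 * #(W' i) + 2 * e := by
  obtain ⟨j, hj, hjmin⟩ := exists_min_image I (fun i => #(F i)) hI.nonempty
  obtain ⟨H₀, hH₀, hrad₀, hcard₀⟩ := hlarge j hj
  obtain ⟨H, hHH₀, hrad, ⟨i, hi, hhalf⟩, hupper⟩ := hcoh.exists_covering_half hdeg hrad₀ hcard₀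
    (J := I.erase j) (W := W) (hI.erase_nonempty)
    (fun i hi => hW i (mem_of_mem_erase hi)) fun i hi =>
      (h.disjoint j hj i (mem_of_mem_erase hi) (ne_of_mem_erase hi).symm).mono_left hH₀
  obtain ⟨hij, hiI⟩ := mem_erase.1 hi
  have hHj : H ⊆ W j := hHH₀.trans hH₀
  obtain ⟨v, hv⟩ := hrad.nonempty
  refine ⟨j, hj, _, _, h.merge hiI hj hij hrad hHj,
    sum_two_pow_le_sum_erase hiI hj hij (hjmin i hiI) ?_ fun l hl => ?_, fun l hl => ?_⟩
  · have hHF : H ∉ F i := fun hmem =>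
      disjoint_left.1 (h.separated i hiI j hj hij H hmem).1 hv (hHj hv)
    rw [Function.update_self, card_insert_of_notMem hHF]
  · rw [Function.update_of_ne hl]
  · rcases eq_or_ne l i with rfl | hli
    · have he : 0 ≤ e := (Nat.cast_nonneg _).trans (hdeg v).le
      have hhalf' : (#(W l) : ℝ) ≤ 2 * #(W l ∩ nbhd G H) := mod_cast hhalf
      rw [Function.update_self]
      linarith
    · have hsplit : (#(W l ∩ nbhd G H) : ℝ) + #(W l \ nbhd G H) = #(W l) :=
        mod_cast card_inter_add_card_sdiff (W l) (nbhd G H)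
      rw [Function.update_of_ne hli]
      linarith [hupper l hl]

omit [DecidableEq ι] in
-- A bound `x` on the sizes of the blocks becomes `x / 2 - e` after a merge, hence the recursion
-- `x ↦ 2 * x + 2 * e` behind the factor `2 ^ (#I + 1) - 2`.
theorem IsArrangement.exists_bundle (h : IsArrangement G k I F W) (hI : I.Nonempty) (he : 0 ≤ e)
    (hcoh : IsCoherent G s e) (hdeg : ∀ v, (G.degree v : ℝ) < e)
    (hlarge : ∀ B : Finset V, 3 * e ≤ #B → ∃ H ⊆ B, HasRadiusLE G H k ∧ s ≤ #H)
    (hW : ∀ i ∈ I, ((2 : ℝ) ^ (#I + 1) - 2) * e ≤ #(W i)) :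
    ∃ S B, IsBundle G k S B ∧ ∑ i ∈ I, 2 ^ #(F i) ≤ 2 ^ #S ∧ 2 * e ≤ #B := by
  classical
  induction I using Finset.strongInduction generalizing F W with
  | H I ih =>
  rcases hI.exists_eq_singleton_or_nontrivial with ⟨i, rfl⟩ | hInt
  · have hi := mem_singleton_self i
    refine ⟨F i, W i, h.bundle i hi, by rw [sum_singleton], ?_⟩
    simpa [show (2 : ℝ) ^ 2 - 2 = 2 by norm_num] using hW i hi
  · have hW6 : ∀ i ∈ I, 6 * e ≤ #(W i) := fun i hi => by
      have h8 : (2 : ℝ) ^ 3 ≤ 2 ^ (#I + 1) := by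
        have := one_lt_card_iff_nontrivial.2 hInt
        exact pow_le_pow_right₀ one_le_two (by omega)
      nlinarith [hW i hi]
    obtain ⟨j, hj, F', W', h', hsum, hW'⟩ := h.exists_merge hInt hcoh hdeg
      (fun i hi => by linarith [hW6 i hi]) (fun i hi => hlarge _ (by linarith [hW6 i hi]))
    obtain ⟨S, B, hSB, hS, hB⟩ := ih _ (erase_ssubset hj) h' hInt.erase_nonempty fun i hi => by
      have hWi := hW i (mem_of_mem_erase hi)
      rw [← card_erase_add_one hj, pow_succ] at hWi
      linarith [hW' i hi]
    exact ⟨S, B, hSB, hsum.trans hS, hB⟩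

end Arrangement

section Spider

variable {V : Type} [DecidableEq V] {G : SimpleGraph V} {k n : ℕ}

/-- `G` contains a spider of length `n`, height at most `r` and mass at least `μ`. The hearts and
the bases of its coverings are the families `H` and `B`, and `a` is their common apex. -/
def HasSpider (G : SimpleGraph V) (n : ℕ) (r μ : ℝ) : Prop :=
  ∃ (a : V) (H B : Fin n → Finset V),
    (∀ i, IsCovering G a (H i) (B i)) ∧
    (∀ i, HeightLE G a (H i) r) ∧
    (∀ i, μ ≤ #(B i)) ∧
    (∀ i j, i ≠ j → Disjoint ((H i).erase a) ((H j).erase a) ∧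
      Anticomplete G ((H i).erase a) ((H j).erase a))

variable [G.LocallyFinite] {a : V} {H : Finset V}

theorem HasRadiusLE.exists_walk_insert (hrad : HasRadiusLE G H k) (ha : a ∈ nbhd G H) {u : V}
    (hu : u ∈ insert a H) :
    ∃ p : G.Walk a u, (∀ x ∈ p.support, x ∈ insert a H) ∧ p.length ≤ 2 * k + 1 := by
  rcases mem_insert.1 hu with rfl | huH
  · exact ⟨.nil, by simp, by simp⟩
  obtain ⟨h, hh, hadj⟩ := mem_nbhd.1 ha
  obtain ⟨p, hpH, hpk⟩ := hrad.exists_walk hh huH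
  refine ⟨.cons hadj.symm p, fun x hx => ?_, by simpa using hpk⟩
  rw [SimpleGraph.Walk.support_cons, List.mem_cons] at hx
  exact mem_insert.2 (hx.imp_right (hpH x))

theorem HasRadiusLE.heightLE_insert (hrad : HasRadiusLE G H k) (ha : a ∈ nbhd G H) :
    HeightLE G a (insert a H) (2 * k + 2) := by
  intro u hu
  obtain ⟨p, hpH, hpk⟩ := hrad.exists_walk_insert ha hu
  refine ⟨p.bypass, p.bypass_isPath, fun x hx => hpH x (p.support_bypass_subset_support hx), ?_⟩
  have hlen : (p.bypass.length : ℝ) ≤ 2 * k + 1 := mod_cast p.length_bypass_le_length.trans hpk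
  linarith

theorem HasRadiusLE.isCovering_insert (hrad : HasRadiusLE G H k) (ha : a ∈ nbhd G H)
    {B : Finset V} (hHB : Disjoint H B) (hBH : B ⊆ nbhd G H) :
    IsCovering G a (insert a H) (B.erase a) := by
  refine ⟨?_, mem_insert_self a H, ?_, fun b hb => ?_⟩
  · exact disjoint_insert_left.2 ⟨notMem_erase a B, hHB.mono_right (erase_subset a B)⟩
  · rw [SimpleGraph.connected_iff_exists_forall_reachable]
    refine ⟨⟨a, by simp⟩, fun ⟨u, hu⟩ => ?_⟩
    obtain ⟨p, hpH, -⟩ := hrad.exists_walk_insert ha hu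
    exact ⟨p.induce _ hpH⟩
  · obtain ⟨h, hh, hadj⟩ := mem_nbhd.1 (hBH (mem_of_mem_erase hb))
    exact ⟨h, mem_insert_of_mem hh, hadj⟩

theorem IsBundle.hasSpider {S : Finset (Finset V)} {B : Finset V} (h : IsBundle G k S B)
    (hn : n ≤ #S) {μ : ℝ} (hB : B.Nonempty) (hμ : μ + 1 ≤ #B) :
    HasSpider G n (2 * k + 2) μ := by
  obtain ⟨a, ha⟩ := hB
  obtain ⟨g⟩ : Nonempty (Fin n ↪ S) := Function.Embedding.nonempty_of_card_le (by simpa using hn)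
  have ha_nbhd : ∀ i, a ∈ nbhd G (g i) := fun i => h.covers _ (g i).2 ha
  have ha_notMem : ∀ i, a ∉ (g i : Finset V) := fun i => disjoint_right.1 (h.disjoint _ (g i).2) ha
  refine ⟨a, fun i => insert a ↑(g i), fun _ => B.erase a, fun i => ?_, fun i => ?_, fun _ => ?_,
    fun i j hij => ?_⟩
  · exact (h.radius _ (g i).2).isCovering_insert (ha_nbhd i) (h.disjoint _ (g i).2)
      (h.covers _ (g i).2)
  · exact (h.radius _ (g i).2).heightLE_insert (ha_nbhd i)
  · have hcard : (#(B.erase a) : ℝ) + 1 = #B := mod_cast card_erase_add_one ha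
    linarith
  · rw [erase_insert (ha_notMem i), erase_insert (ha_notMem j)]
    exact h.separated _ (g i).2 _ (g j).2 fun hgij => hij (g.injective (Subtype.ext hgij))

end Spider

theorem exists_pairwise_disjoint_card_eq {ι α : Type*} [Fintype ι] [Fintype α] {m : ℕ}
    (h : Fintype.card ι * m ≤ Fintype.card α) :
    ∃ W : ι → Finset α, (∀ i, #(W i) = m) ∧ ∀ i j, i ≠ j → Disjoint (W i) (W j) := by
  obtain ⟨g⟩ : Nonempty (ι × Fin m ↪ α) :=
    Function.Embedding.nonempty_of_card_le (by simpa using h)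
  refine ⟨fun i => univ.map ((Function.Embedding.sectR i (Fin m)).trans g), fun i => by simp,
    fun i j hij => ?_⟩
  simp only [disjoint_left, mem_map, mem_univ, true_and]
  rintro _ ⟨t, rfl⟩ ⟨t', ht'⟩
  exact hij (congrArg Prod.fst (g.injective ht')).symm

theorem two_pow_add_add_one_le_two_pow_two_mul {n : ℕ} (hn : 1 ≤ n) :
    2 ^ n + n + 1 ≤ 2 ^ (2 * n) := by
  have hlt : n + 1 ≤ 2 ^ n := Nat.lt_two_pow_self
  have htwo : 2 ≤ 2 ^ n := Nat.le_self_pow (Nat.one_le_iff_ne_zero.1 hn) 2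
  calc 2 ^ n + n + 1 = 2 ^ n + (n + 1) := add_assoc ..
    _ ≤ 2 ^ n + 2 ^ n := by gcongr
    _ = 2 * 2 ^ n := (two_mul _).symm
    _ ≤ 2 ^ n * 2 ^ n := by gcongr
    _ = 2 ^ (2 * n) := by rw [two_mul, pow_add]

theorem two_pow_sub_two_mul_le_natCast_div {n N : ℕ} (hn : 1 ≤ n) {ε : ℝ}
    (hε : ε ≤ ((2 : ℝ) ^ (2 ^ (2 * n)))⁻¹) (hN : 1 ≤ ε * N) :
    ((2 : ℝ) ^ (2 ^ n + 1) - 2) * (ε * N) ≤ (N / 2 ^ n : ℕ) := by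
  have hfloor : (N : ℝ) ≤ 2 ^ n * ((N / 2 ^ n : ℕ) + 1) :=
    mod_cast (Nat.lt_mul_div_succ N (by positivity : 0 < 2 ^ n)).le
  have hpow : (2 : ℝ) ^ n * 2 ^ (2 ^ n + 1) * ε ≤ 1 := by
    calc (2 : ℝ) ^ n * 2 ^ (2 ^ n + 1) * ε
        ≤ 2 ^ (n + (2 ^ n + 1)) * ((2 : ℝ) ^ (2 ^ (2 * n)))⁻¹ := by rw [← pow_add]; gcongr
      _ ≤ 1 := by
        rw [← div_eq_mul_inv]
        refine div_le_one_of_le₀ (pow_le_pow_right₀ one_le_two ?_) (by positivity)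
        linarith [two_pow_add_add_one_le_two_pow_two_mul hn]
  have hmul : (2 : ℝ) ^ (2 ^ n + 1) * (ε * N) ≤ (N / 2 ^ n : ℕ) + 1 := by
    refine le_of_mul_le_mul_left ?_ (by positivity : (0 : ℝ) < 2 ^ n)
    calc (2 : ℝ) ^ n * (2 ^ (2 ^ n + 1) * (ε * N))
        = (2 : ℝ) ^ n * 2 ^ (2 ^ n + 1) * ε * (N : ℝ) := by ring
      _ ≤ 1 * (N : ℝ) := by gcongr
      _ ≤ 2 ^ n * (((N / 2 ^ n : ℕ) : ℝ) + 1) := by rwa [one_mul]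
  linarith

theorem IsCoherent.exists_hasRadiusLE_of_rpow {V : Type} {G : SimpleGraph V} [G.LocallyFinite]
    {c ε N : ℝ} {k : ℕ} (hε : 0 ≤ ε) (hε1 : ε ≤ 1) (hN : 1 ≤ N) (hk : 1 ≤ k * c)
    (hcoh : IsCoherent G (ε * N ^ (1 - c)) (ε * N)) {W : Finset V} (hW : 3 * (ε * N) ≤ #W) :
    ∃ H ⊆ W, HasRadiusLE G H k ∧ ε * N ^ (1 - c) ≤ #H := by
  have hN0 : 0 < N := zero_lt_one.trans_le hN
  have hc : 0 < c := pos_of_mul_pos_right (zero_lt_one.trans_le hk) k.cast_nonneg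
  have hmul : ε * N ^ (1 - c) * N ^ c = ε * N := by
    rw [mul_assoc, ← Real.rpow_add hN0, sub_add_cancel, Real.rpow_one]
  refine hcoh.exists_hasRadiusLE (by positivity) (Real.one_le_rpow hN hc.le) hmul.le ?_ hW
  calc ε * N ^ (1 - c) ≤ 1 * N ^ (1 : ℝ) := by gcongr; linarith
    _ ≤ N ^ (c * k) := by
      rw [one_mul]
      exact Real.rpow_le_rpow_of_exponent_le hN (by linarith)
    _ = (N ^ c) ^ k := Real.rpow_mul_natCast hN0.le c k

theorem stmt_7_general {V : Type} [Fintype V] [DecidableEq V] (G : SimpleGraph V)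
    [DecidableRel G.Adj] (c ε : ℝ) (k n : ℕ) (hk : 1 ≤ k * c) (hn : 1 ≤ n)
    (hε : ε ≤ ((2 : ℝ) ^ (2 ^ (2 * n)))⁻¹) (hV : 2 ≤ Fintype.card V)
    (hsparse : ∀ v, (G.degree v : ℝ) < ε * Fintype.card V)
    (hcoherent : IsCoherent G (ε * (Fintype.card V : ℝ) ^ (1 - c)) (ε * Fintype.card V)) :
    HasSpider G n (2 * k + 2) (ε * Fintype.card V) := by
  have : Nontrivial V := Fintype.one_lt_card_iff_nontrivial.1 hV
  have hε1 : ε ≤ 1 := hε.trans (inv_le_one_of_one_le₀ (one_le_pow₀ one_le_two))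
  have hN : (1 : ℝ) ≤ Fintype.card V := mod_cast one_le_two.trans hV
  have hε0 : 0 ≤ ε := (pos_of_mul_pos_left ((Nat.cast_nonneg _).trans_lt
    (hsparse (Classical.arbitrary V))) (Nat.cast_nonneg _)).le
  have hc : 0 < c := pos_of_mul_pos_right (zero_lt_one.trans_le hk) k.cast_nonneg
  have hse : ε * (Fintype.card V : ℝ) ^ (1 - c) ≤ ε * Fintype.card V := by
    gcongr
    exact Real.rpow_le_self_of_one_le hN (by linarith)
  have he : 1 < ε * Fintype.card V := hcoherent.one_lt hsparse hse
  obtain ⟨W, hWcard, hWdisj⟩ := exists_pairwise_disjoint_card_eq (ι := Fin (2 ^ n)) (α := V)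
    (m := Fintype.card V / 2 ^ n) (by rw [Fintype.card_fin]; exact Nat.mul_div_le _ _)
  obtain ⟨S, B, hSB, hS, hB⟩ :=
    (isArrangement_empty fun i _ j _ => hWdisj i j).exists_bundle univ_nonempty (by positivity)
      hcoherent hsparse
      (fun _ => hcoherent.exists_hasRadiusLE_of_rpow hε0 hε1 hN hk) fun i _ => by
        rw [hWcard, card_univ, Fintype.card_fin]
        exact two_pow_sub_two_mul_le_natCast_div hn hε he.le
  have hSn : n ≤ #S := (Nat.pow_le_pow_iff_right one_lt_two).1 (by simpa using hS)
  have hBpos : (0 : ℝ) < #B := by linarith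
  exact hSB.hasSpider hSn (card_pos.1 (mod_cast hBpos)) (by linarith)

/-- existence of a spider of length n, height at most 2 + 2/c,
with mass at least ε|G|. -/
theorem stmt_7 {V : Type} [Fintype V] [DecidableEq V] (G : SimpleGraph V) [DecidableRel G.Adj]
    (c : ℝ) (n : ℕ) (ε : ℝ) (hc : 0 < c) (hci : ∃ k : ℕ, (k : ℝ) * c = 1) (hn : 1 ≤ n)
    (hε : ε = ((2 : ℝ) ^ ((2 : ℕ) ^ (2 * n)))⁻¹) (hV : 2 ≤ Fintype.card V)
    (hsparse : ∀ v : V, (G.degree v : ℝ) < ε * Fintype.card V)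
    (hcoherent : ¬ ∃ A B : Finset V, Disjoint A B ∧ Anticomplete G A B ∧
      ε * (Fintype.card V : ℝ) ^ (1 - c) ≤ (A.card : ℝ) ∧
      ε * Fintype.card V ≤ (B.card : ℝ)) :
    ∃ (a : V) (H B : Fin n → Finset V),
      (∀ i, IsCovering G a (H i) (B i)) ∧
      (∀ i, HeightLE G a (H i) (2 + 2 / c)) ∧
      (∀ i, ε * Fintype.card V ≤ ((B i).card : ℝ)) ∧
      (∀ i j, i ≠ j → Disjoint ((H i).erase a) ((H j).erase a) ∧
        Anticomplete G ((H i).erase a) ((H j).erase a)) := by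
  obtain ⟨k, hk⟩ := hci
  have hheight : 2 + 2 / c = 2 * k + 2 := by
    rw [eq_div_of_mul_eq hc.ne' hk]
    ring
  have hcoh : IsCoherent G (ε * (Fintype.card V : ℝ) ^ (1 - c)) (ε * Fintype.card V) :=
    fun A B hAB hanti hA => lt_of_not_ge fun hB => hcoherent ⟨A, B, hAB, hanti, hA, hB⟩
  rw [hheight]
  exact stmt_7_general G c ε k n hk.ge hn hε.le hV hsparse hcoh
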